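/- Let R be a commutative ring equipped with a nonarchimedean submultiplicative norm |·| such that |p·1_R| ≤ p⁻¹, let d ≥ 1 and let r ∈ [1/p, 1). Let φ : R[T₁,…,T_d] → R[T₁,…,T_d] be the R-algebra homomorphism determined by φ(T_i) = (1 + T_i)^p − 1 for each i. Then ‖φ(μ)‖_{r^{1/p}} ≤ ‖μ‖_r for every polynomial μ ∈ R[T₁,…,T_d], where ‖·‖_t denotes the Gauss norm. -/

import Mathlib

/-! The bound rests on one computation for a single variable: with `t = r ^ (1 / p)`, the polynomial
`(1 + X) ^ p - 1 = ∑_{1 ≤ k ≤ p} (p choose k) X ^ k` has Gauss norm at most `r`. For `0 < k < p` the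
prime `p` divides the binomial coefficient, so that term contributes at most `p⁻¹ * t ^ k ≤ p⁻¹ ≤ r`,
while the term `k = p` contributes `t ^ p = r` (`gaussLe_one_add_X_pow_sub_one`).
Gauss norms are nonarchimedean and submultiplicative (`GaussLe.sum`, `GaussLe.mul`), so the image of
each term `c T ^ α` of `μ` has norm at most `ν c * r ^ |α| ≤ ‖μ‖_r`, and so does their sum. -/

/-- A (nonarchimedean, submultiplicative) norm on a commutative ring. -/
def IsRingNorm {R : Type*} [CommRing R] (ν : R → ℝ) : Prop :=
  (∀ x, 0 ≤ ν x) ∧ ν 0 = 0 ∧ ν 1 = 1 ∧ (∀ x, ν x = 0 → x = 0) ∧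
  (∀ x y, ν (x + y) ≤ max (ν x) (ν y)) ∧ (∀ x y, ν (x * y) ≤ ν x * ν y)

/-- The Gauss norm `‖Σ_α d_α T^α‖_t = max_α |d_α| * t ^ |α|` on the polynomial ring
`R[T₁,…,T_d]`, where `|α| = α₁ + ⋯ + α_d`. -/
noncomputable def gaussNorm {R : Type*} [CommRing R] (ν : R → ℝ) (t : ℝ) {d : ℕ}
    (q : MvPolynomial (Fin d) R) : ℝ :=
  ⨆ α : Fin d →₀ ℕ, ν (MvPolynomial.coeff α q) * t ^ (α.sum fun _ e => e)

/-- The Gauss norm of `q` at radius `t` is at most `C`, phrased coefficientwise so that no supremum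
has to be manipulated. -/
def GaussLe {R : Type*} [CommRing R] (ν : R → ℝ) (t : ℝ) {d : ℕ} (C : ℝ)
    (q : MvPolynomial (Fin d) R) : Prop :=
  ∀ α : Fin d →₀ ℕ, ν (MvPolynomial.coeff α q) * t ^ (α.sum fun _ e => e) ≤ C

section

variable {R : Type*} [CommRing R] {ν : R → ℝ} {d : ℕ} {t : ℝ}

/-- The ultrametric inequality for finite sums, weighted by a nonnegative factor `x`. -/
lemma IsRingNorm.sum_mul_le (hν : IsRingNorm ν) {ι : Type*} (s : Finset ι) (f : ι → R)
    {x C : ℝ} (hx : 0 ≤ x) (hC : 0 ≤ C) (h : ∀ i ∈ s, ν (f i) * x ≤ C) :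
    ν (∑ i ∈ s, f i) * x ≤ C := by
  classical
  obtain ⟨-, h0, -, -, hadd, -⟩ := hν
  induction s using Finset.induction_on with
  | empty => simpa [h0] using hC
  | insert a s ha ih =>
    rw [Finset.sum_insert ha]
    refine (mul_le_mul_of_nonneg_right (hadd _ _) hx).trans ?_
    rw [max_mul_of_nonneg _ _ hx]
    exact max_le (h a (Finset.mem_insert_self a s))
      (ih fun i hi => h i (Finset.mem_insert_of_mem hi))

lemma IsRingNorm.natCast_le_one (hν : IsRingNorm ν) (n : ℕ) : ν (n : R) ≤ 1 := by
  obtain ⟨-, h0, h1, -, hadd, -⟩ := hν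
  induction n with
  | zero => simp [h0]
  | succ n ih =>
    rw [Nat.cast_succ]
    exact (hadd _ _).trans (max_le ih h1.le)

lemma GaussLe.mono {C D : ℝ} {q : MvPolynomial (Fin d) R} (h : GaussLe ν t C q) (hCD : C ≤ D) :
    GaussLe ν t D q :=
  fun α => (h α).trans hCD

lemma GaussLe.sum (hν : IsRingNorm ν) (ht : 0 ≤ t) {ι : Type*} (s : Finset ι)
    (f : ι → MvPolynomial (Fin d) R) {C : ℝ} (hC : 0 ≤ C) (h : ∀ i ∈ s, GaussLe ν t C (f i)) :
    GaussLe ν t C (∑ i ∈ s, f i) := by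
  intro α
  rw [MvPolynomial.coeff_sum]
  exact hν.sum_mul_le s _ (pow_nonneg ht _) hC fun i hi => h i hi α

lemma GaussLe.mul (hν : IsRingNorm ν) (ht : 0 ≤ t) {C D : ℝ} (hC : 0 ≤ C) (hD : 0 ≤ D)
    {q q' : MvPolynomial (Fin d) R} (h : GaussLe ν t C q) (h' : GaussLe ν t D q') :
    GaussLe ν t (C * D) (q * q') := by
  intro α
  rw [MvPolynomial.coeff_mul]
  refine hν.sum_mul_le _ _ (pow_nonneg ht _) (mul_nonneg hC hD) ?_
  rintro ⟨β, γ⟩ hβγ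
  obtain rfl : β + γ = α := by simpa using hβγ
  obtain ⟨hnn, -, -, -, -, hmul⟩ := hν
  rw [Finsupp.sum_add_index' (fun _ => rfl) (fun _ _ _ => rfl), pow_add]
  calc _ ≤ (ν (MvPolynomial.coeff β q) * ν (MvPolynomial.coeff γ q')) *
        (t ^ (β.sum fun _ e => e) * t ^ (γ.sum fun _ e => e)) :=
        mul_le_mul_of_nonneg_right (hmul _ _) (by positivity)
    _ = (ν (MvPolynomial.coeff β q) * t ^ (β.sum fun _ e => e)) *
        (ν (MvPolynomial.coeff γ q') * t ^ (γ.sum fun _ e => e)) := by ring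
    _ ≤ C * D := mul_le_mul (h β) (h' γ) (mul_nonneg (hnn _) (pow_nonneg ht _)) hC

lemma gaussLe_monomial (hν : IsRingNorm ν) (ht : 0 ≤ t) (β : Fin d →₀ ℕ) (c : R) :
    GaussLe ν t (ν c * t ^ (β.sum fun _ e => e)) (MvPolynomial.monomial β c) := by
  classical
  intro α
  rw [MvPolynomial.coeff_monomial]
  split_ifs with h
  · rw [h]
  · rw [hν.2.1, zero_mul]
    exact mul_nonneg (hν.1 c) (pow_nonneg ht _)

lemma gaussLe_C (hν : IsRingNorm ν) (ht : 0 ≤ t) (c : R) :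
    GaussLe ν t (ν c) (MvPolynomial.C c : MvPolynomial (Fin d) R) := by
  simpa using gaussLe_monomial (d := d) hν ht 0 c

lemma gaussLe_one (hν : IsRingNorm ν) (ht : 0 ≤ t) :
    GaussLe ν t 1 (1 : MvPolynomial (Fin d) R) := by
  simpa [hν.2.2.1] using gaussLe_C (d := d) hν ht 1

lemma gaussLe_X_pow (hν : IsRingNorm ν) (ht : 0 ≤ t) (i : Fin d) (k : ℕ) :
    GaussLe ν t (t ^ k) (MvPolynomial.X i ^ k : MvPolynomial (Fin d) R) := by
  rw [MvPolynomial.X_pow_eq_monomial]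
  simpa [hν.2.2.1] using gaussLe_monomial hν ht (Finsupp.single i k) (1 : R)

lemma GaussLe.pow (hν : IsRingNorm ν) (ht : 0 ≤ t) {C : ℝ} (hC : 0 ≤ C)
    {q : MvPolynomial (Fin d) R} (h : GaussLe ν t C q) (n : ℕ) :
    GaussLe ν t (C ^ n) (q ^ n) := by
  induction n with
  | zero => simpa using gaussLe_one hν ht
  | succ n ih =>
    rw [pow_succ, pow_succ]
    exact ih.mul hν ht (pow_nonneg hC n) hC h

lemma GaussLe.prod (hν : IsRingNorm ν) (ht : 0 ≤ t) {ι : Type*} (s : Finset ι)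
    (f : ι → MvPolynomial (Fin d) R) (C : ι → ℝ) (hC : ∀ i, 0 ≤ C i)
    (h : ∀ i, GaussLe ν t (C i) (f i)) :
    GaussLe ν t (∏ i ∈ s, C i) (∏ i ∈ s, f i) := by
  classical
  induction s using Finset.induction_on with
  | empty => simpa using gaussLe_one hν ht
  | insert a s ha ih =>
    rw [Finset.prod_insert ha, Finset.prod_insert ha]
    exact (h a).mul hν ht (hC a) (Finset.prod_nonneg fun i _ => hC i) ih

/-- The supremum defining the Gauss norm is over a set with finitely many values, hence it is not
the junk value of an unbounded supremum. -/
lemma term_le_gaussNorm (hν : IsRingNorm ν) (t : ℝ) (q : MvPolynomial (Fin d) R)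
    (α : Fin d →₀ ℕ) :
    ν (MvPolynomial.coeff α q) * t ^ (α.sum fun _ e => e) ≤ gaussNorm ν t q := by
  refine le_ciSup (f := fun α : Fin d →₀ ℕ =>
    ν (MvPolynomial.coeff α q) * t ^ (α.sum fun _ e => e)) ?_ α
  refine Set.Finite.bddAbove (((q.support.finite_toSet.image fun α : Fin d →₀ ℕ =>
    ν (MvPolynomial.coeff α q) * t ^ (α.sum fun _ e => e)).union
      (Set.finite_singleton 0)).subset ?_)
  rintro _ ⟨β, rfl⟩
  by_cases hβ : β ∈ q.support
  · exact Or.inl ⟨β, hβ, rfl⟩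
  · refine Or.inr ?_
    simp [MvPolynomial.notMem_support_iff.mp hβ, hν.2.1]

/-- The one-variable estimate: `(1 + X) ^ p - 1` has Gauss norm at most `r = t ^ p`, because its
coefficients other than the leading one are divisible by `p`. -/
lemma gaussLe_one_add_X_pow_sub_one {p : ℕ} (hp : p.Prime) (hν : IsRingNorm ν)
    (hp_norm : ν ((p : ℕ) : R) ≤ ((p : ℝ))⁻¹) {r : ℝ} (hr : (p : ℝ)⁻¹ ≤ r)
    (ht : 0 ≤ t) (ht1 : t ≤ 1) (htp : t ^ p = r) (i : Fin d) :
    GaussLe ν t r ((1 + MvPolynomial.X i) ^ p - 1 : MvPolynomial (Fin d) R) := by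
  have hr0 : 0 ≤ r := htp ▸ pow_nonneg ht p
  have hexp : ((1 + MvPolynomial.X i) ^ p - 1 : MvPolynomial (Fin d) R) =
      ∑ k ∈ Finset.range p,
        MvPolynomial.C ((p.choose (k + 1) : ℕ) : R) * MvPolynomial.X i ^ (k + 1) := by
    rw [add_comm, add_pow, Finset.sum_range_succ']
    simp [mul_comm]
  rw [hexp]
  refine GaussLe.sum hν ht _ _ hr0 fun k hk => ?_
  refine ((gaussLe_C hν ht _).mul hν ht (hν.1 _) (pow_nonneg ht _)
    (gaussLe_X_pow hν ht i (k + 1))).mono ?_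
  rcases (Nat.succ_le_of_lt (Finset.mem_range.mp hk)).eq_or_lt with h | h
  · rw [show k + 1 = p from h, Nat.choose_self, Nat.cast_one, hν.2.2.1, one_mul, htp]
  · obtain ⟨m, hm⟩ := hp.dvd_choose_self (Nat.succ_ne_zero k) h
    have hc : ν ((p.choose (k + 1) : ℕ) : R) ≤ r := by
      rw [show p.choose (k + 1) = p * m from hm, Nat.cast_mul]
      calc ν ((p : R) * (m : R)) ≤ ν (p : R) * ν (m : R) := hν.2.2.2.2.2 _ _
        _ ≤ ν (p : R) := mul_le_of_le_one_right (hν.1 _) (hν.natCast_le_one m)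
        _ ≤ r := hp_norm.trans hr
    exact (mul_le_of_le_one_right (hν.1 _) (pow_le_one₀ ht ht1)).trans hc

end

/-- **Statement 15**. Let `R` carry a nonarchimedean submultiplicative norm with
`|p·1| ≤ p⁻¹`, let `d ≥ 1` and `r ∈ [1/p, 1)`. Let `φ` be the `R`-algebra endomorphism of
`R[T₁,…,T_d]` with `φ(Tᵢ) = (1 + Tᵢ)^p − 1`. Then `‖φ(μ)‖_{r^{1/p}} ≤ ‖μ‖_r` for every
polynomial `μ`, where `‖·‖_t` denotes the Gauss norm. -/
theorem gaussNorm_frobenius_le {R : Type*} [CommRing R] (p : ℕ) (hp : p.Prime)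
    (ν : R → ℝ) (hν : IsRingNorm ν) (hp_norm : ν ((p : ℕ) : R) ≤ ((p : ℝ))⁻¹)
    (d : ℕ) (hd : 1 ≤ d) (r : ℝ) (hr : 1 / (p : ℝ) ≤ r) (hr1 : r < 1) :
    ∀ μ : MvPolynomial (Fin d) R,
      gaussNorm ν (r ^ (1 / (p : ℝ)))
        (MvPolynomial.aeval (fun i : Fin d => (1 + MvPolynomial.X i) ^ p - 1) μ) ≤
      gaussNorm ν r μ := by
  intro μ
  have hp0 : (0 : ℝ) < p := by exact_mod_cast hp.pos
  rw [one_div] at hr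
  have hr0 : 0 ≤ r := (inv_nonneg.mpr hp0.le).trans hr
  have ht : 0 ≤ r ^ (1 / (p : ℝ)) := Real.rpow_nonneg hr0 _
  have ht1 : r ^ (1 / (p : ℝ)) ≤ 1 := Real.rpow_le_one hr0 hr1.le (by positivity)
  have htp : (r ^ (1 / (p : ℝ))) ^ p = r := by
    rw [one_div, Real.rpow_inv_natCast_pow hr0 hp.ne_zero]
  have hμ : 0 ≤ gaussNorm ν r μ :=
    (mul_nonneg (hν.1 _) (pow_nonneg hr0 _)).trans (term_le_gaussNorm hν r μ 0)
  suffices h : GaussLe ν (r ^ (1 / (p : ℝ))) (gaussNorm ν r μ)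
      (MvPolynomial.aeval (fun i : Fin d => (1 + MvPolynomial.X i) ^ p - 1) μ) from ciSup_le h
  rw [MvPolynomial.aeval_def, MvPolynomial.eval₂_eq]
  refine GaussLe.sum hν ht _ _ hμ fun α _ => ?_
  have hprod := GaussLe.prod hν ht α.support
    (fun i : Fin d => ((1 + MvPolynomial.X i) ^ p - 1 : MvPolynomial (Fin d) R) ^ α i)
    (fun i => r ^ α i) (fun i => pow_nonneg hr0 _) fun i =>
      (gaussLe_one_add_X_pow_sub_one hp hν hp_norm hr ht ht1 htp i).pow hν ht hr0 (α i)
  rw [Finset.prod_pow_eq_pow_sum] at hprod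
  exact ((gaussLe_C hν ht _).mul hν ht (hν.1 _) (pow_nonneg hr0 _) hprod).mono
    (term_le_gaussNorm hν r μ α)
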